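/- arXiv:1104.3745 — 2 statements merged into one kernel-verified Lean document; each statement's English description precedes it below -/
import Mathlib

section
/- Let Ω ⊊ ℝⁿ (n ≥ 2) be a domain that is starlike with respect to a point x ∈ Ω. Then for every r > 0 the j-metric ball B_j(x,r) is starlike with respect to x. -/
open Set Metric MeasureTheory

noncomputable section

variable {E : Type*} [NormedAddCommGroup E] [NormedSpace ℝ E]

/-- The quasihyperbolic length of a path `γ` (parametrized on `[0,1]`) in the
domain `Ω`: the integral of `‖γ'(t)‖ / d(γ(t), ∂Ω)`. -/
def qhLength (Ω : Set E) (γ : ℝ → E) : ℝ :=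
  ∫ t in (0:ℝ)..1, ‖deriv γ t‖ / infDist (γ t) (frontier Ω)

/-- A rectifiable curve in `Ω` joining `x` and `y`, formalized as a map on `[0,1]`
which is Lipschitz on `[0,1]` (every rectifiable curve admits such a
parametrization), takes values in `Ω`, and joins `x` to `y`. -/
def IsRectPath (Ω : Set E) (x y : E) (γ : ℝ → E) : Prop :=
  (∃ K : NNReal, LipschitzOnWith K γ (Icc 0 1)) ∧
    MapsTo γ (Icc 0 1) Ω ∧ γ 0 = x ∧ γ 1 = y

/-- The quasihyperbolic metric on `Ω`. -/
def qhDist (Ω : Set E) (x y : E) : ℝ :=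
  sInf (qhLength Ω '' {γ | IsRectPath Ω x y γ})

/-- The quasihyperbolic ball. -/
def qhBall (Ω : Set E) (x : E) (r : ℝ) : Set E :=
  {y ∈ Ω | qhDist Ω x y < r}

/-- The distance ratio metric (`j`-metric) on `Ω`. -/
def jDist (Ω : Set E) (x y : E) : ℝ :=
  Real.log (1 + dist x y / min (infDist x (frontier Ω)) (infDist y (frontier Ω)))

/-- The `j`-metric ball. -/
def jBall (Ω : Set E) (x : E) (r : ℝ) : Set E :=
  {y ∈ Ω | jDist Ω x y < r}

/-- `G` is strictly starlike with respect to `x`: it is starlike with respect to `x`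
and every half-line emanating from `x` meets `∂G` at exactly one point. -/
def StrictlyStarlike (G : Set E) (x : E) : Prop :=
  StarConvex ℝ x G ∧
    ∀ v : E, v ≠ 0 → ∃! p : E, p ∈ frontier G ∧ ∃ t : ℝ, 0 < t ∧ p = x + t • v

/-- `G` is strictly convex: it is strictly starlike with respect to each of its points. -/
def StrictlyConvexSet (G : Set E) : Prop :=
  ∀ x ∈ G, StrictlyStarlike G x

/-- A half-line: `{t • v + z : t > 0}` or `{t • v + z : t ≥ 0}` with `v ≠ 0`. -/
def IsHalfline (L : Set E) : Prop :=
  ∃ z v : E, v ≠ 0 ∧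
    (L = {p | ∃ t : ℝ, 0 < t ∧ p = t • v + z} ∨
      L = {p | ∃ t : ℝ, 0 ≤ t ∧ p = t • v + z})

/-- `G` is close-to-convex: its complement can be covered with pairwise
non-intersecting half-lines. -/
def CloseToConvex (G : Set E) : Prop :=
  ∃ 𝒮 : Set (Set E), (∀ L ∈ 𝒮, IsHalfline L) ∧ 𝒮.PairwiseDisjoint id ∧ Gᶜ = ⋃₀ 𝒮

end

/-!
Let `y ∈ Ω` and `z = a • x + t • y` with `a + t = 1`. The homothety of ratio `t` centred at `x` maps
`Ω` into itself and carries the ball of radius `d(y, ∂Ω)` around `y`, which lies in `Ω`, to the ball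
of radius `t d(y, ∂Ω)` around `z`. Hence `d(z, ∂Ω) ≥ t d(y, ∂Ω)`. So passing from `j(x, y)` to
`j(x, z)` multiplies the numerator `|x - y|` by `t` and the denominator by at least `t`.
-/

theorem subset_of_isPreconnected_of_disjoint_frontier {X : Type*} [TopologicalSpace X]
    {s t : Set X} (ht : IsPreconnected t) (hdisj : Disjoint t (frontier s))
    (hne : (t ∩ s).Nonempty) : t ⊆ s := by
  have hint : closure s ∩ t ⊆ interior s := fun p ⟨hps, hpt⟩ ↦
    by_contra fun hp ↦ hdisj.notMem_of_mem_left hpt ⟨hps, hp⟩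
  obtain ⟨p, hpt, hps⟩ := hne
  refine (ht.subset_of_closure_inter_subset isOpen_interior
    ⟨p, hpt, hint ⟨subset_closure hps, hpt⟩⟩ ?_).trans interior_subset
  exact (inter_subset_inter_left t (closure_mono interior_subset)).trans hint

section InfDistFrontier

variable {X : Type*} [PseudoMetricSpace X] {s : Set X} {p : X} {ρ : ℝ}

theorem le_infDist_frontier_of_ball_subset (hs : (frontier s).Nonempty) (h : ball p ρ ⊆ s) :
    ρ ≤ infDist p (frontier s) := by
  refine (le_infDist hs).2 fun q hq ↦ ?_
  by_contra! hlt
  exact hq.2 (interior_maximal h isOpen_ball (mem_ball'.2 hlt))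

theorem infDist_frontier_pos_of_isOpen [PreconnectedSpace X] (hs : IsOpen s) (hs_ne : s ≠ univ)
    (hp : p ∈ s) : 0 < infDist p (frontier s) :=
  (isClosed_frontier.notMem_iff_infDist_pos (nonempty_frontier_iff.2 ⟨⟨p, hp⟩, hs_ne⟩)).1
    ((disjoint_frontier_iff_isOpen.2 hs).notMem_of_mem_right hp)

end InfDistFrontier

section Homothety

variable {V : Type*} [SeminormedAddCommGroup V] [NormedSpace ℝ V] {s : Set V} {x y : V}
  {a t ρ : ℝ}

theorem ball_infDist_frontier_subset (hy : y ∈ s) : ball y (infDist y (frontier s)) ⊆ s := by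
  obtain hempty | hne := (ball y (infDist y (frontier s))).eq_empty_or_nonempty
  · simp [hempty]
  · exact subset_of_isPreconnected_of_disjoint_frontier (convex_ball _ _).isPreconnected
      disjoint_ball_infDist ⟨y, mem_ball_self (nonempty_ball.1 hne), hy⟩

open scoped Pointwise in
theorem ball_combo_subset_of_starConvex (hs : StarConvex ℝ x s) (h : ball y ρ ⊆ s)
    (ha : 0 ≤ a) (ht : 0 ≤ t) (hat : a + t = 1) : ball (a • x + t • y) (t * ρ) ⊆ s := by
  obtain rfl | ht₀ := ht.eq_or_lt
  · simp
  calc ball (a • x + t • y) (t * ρ) = a • {x} + t • ball y ρ := by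
        rw [_root_.smul_ball ht₀.ne', Real.norm_of_nonneg ht, smul_set_singleton,
          singleton_add_ball]
    _ ⊆ a • {x} + t • s := by gcongr
    _ ⊆ s := starConvex_iff_pointwise_add_subset.1 hs ha ht hat

theorem mul_infDist_frontier_le_of_starConvex (hs : StarConvex ℝ x s) (hy : y ∈ s)
    (ha : 0 ≤ a) (ht : 0 ≤ t) (hat : a + t = 1) :
    t * infDist y (frontier s) ≤ infDist (a • x + t • y) (frontier s) := by
  obtain hempty | hne := (frontier s).eq_empty_or_nonempty
  · simp [hempty]
  · exact le_infDist_frontier_of_ball_subset hne <|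
      ball_combo_subset_of_starConvex hs (ball_infDist_frontier_subset hy) ha ht hat

theorem dist_left_combo (x y : V) (ht : 0 ≤ t) (hat : a + t = 1) :
    dist x (a • x + t • y) = t * dist x y := by
  obtain rfl : a = 1 - t := eq_sub_of_add_eq hat
  rw [← AffineMap.lineMap_apply_module, dist_left_lineMap, Real.norm_of_nonneg ht]

end Homothety

section JMetric

variable {V : Type*} [NormedAddCommGroup V] [NormedSpace ℝ V] {Ω : Set V} {x y : V} {a t : ℝ}

theorem jDist_combo_le_of_starConvex (hopen : IsOpen Ω) (hproper : Ω ≠ univ)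
    (hstar : StarConvex ℝ x Ω) (hy : y ∈ Ω) (ha : 0 ≤ a) (ht : 0 ≤ t) (hat : a + t = 1) :
    jDist Ω x (a • x + t • y) ≤ jDist Ω x y := by
  let δ : V → ℝ := fun p ↦ infDist p (frontier Ω)
  have hδ_pos {p : V} (hp : p ∈ Ω) : 0 < δ p := infDist_frontier_pos_of_isOpen hopen hproper hp
  have hx : 0 < δ x := hδ_pos (hstar.mem ⟨y, hy⟩)
  have hy_pos : 0 < min (δ x) (δ y) := lt_min hx (hδ_pos hy)
  have hz_pos : 0 < min (δ x) (δ (a • x + t • y)) := lt_min hx (hδ_pos (hstar hy ha ht hat))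
  have hmin : t * min (δ x) (δ y) ≤ min (δ x) (δ (a • x + t • y)) := by
    rw [mul_min_of_nonneg _ _ ht]
    exact min_le_min (mul_le_of_le_one_left hx.le (by linarith))
      (mul_infDist_frontier_le_of_starConvex hstar hy ha ht hat)
  have hratio : dist x (a • x + t • y) / min (δ x) (δ (a • x + t • y)) ≤
      dist x y / min (δ x) (δ y) := by
    rw [div_le_div_iff₀ hz_pos hy_pos]
    calc dist x (a • x + t • y) * min (δ x) (δ y)
        = dist x y * (t * min (δ x) (δ y)) := by rw [dist_left_combo x y ht hat]; ring
      _ ≤ dist x y * min (δ x) (δ (a • x + t • y)) := by gcongr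
  exact Real.log_le_log (by positivity) (by gcongr)

theorem j_ball_starlike_of_starlike_general (hopen : IsOpen Ω) (hproper : Ω ≠ univ)
    (hstar : StarConvex ℝ x Ω) (r : ℝ) : StarConvex ℝ x (jBall Ω x r) :=
  fun _ ⟨hy, hyr⟩ _ _ ha ht hat ↦
    ⟨hstar hy ha ht hat,
      (jDist_combo_le_of_starConvex hopen hproper hstar hy ha ht hat).trans_lt hyr⟩

end JMetric

/-- if `Ω` is starlike with respect to `x`, then every `j`-metric ball
centered at `x` is starlike with respect to `x`. -/
theorem j_ball_starlike_of_starlike (n : ℕ) (hn : 2 ≤ n)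
    (Ω : Set (EuclideanSpace ℝ (Fin n)))
    (hopen : IsOpen Ω) (hconn : IsConnected Ω) (hproper : Ω ≠ univ)
    (x : EuclideanSpace ℝ (Fin n)) (hx : x ∈ Ω) (hstar : StarConvex ℝ x Ω)
    (r : ℝ) (hr : 0 < r) :
    StarConvex ℝ x (jBall Ω x r) :=
  j_ball_starlike_of_starlike_general hopen hproper hstar r
end

section
/- Let Ω ⊊ ℝⁿ (n ≥ 2) be any proper subdomain. Then the metric space (Ω, j_Ω) is not geodesic: there exist points x, y ∈ Ω with x ≠ y such that there is no isometric embedding γ : [0, j_Ω(x,y)] → (Ω, j_Ω) with γ(0) = x and γ(j_Ω(x,y)) = y. -/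
open Set Metric MeasureTheory

/-!
Since `d(·, ∂Ω)` is continuous and the dimension is at least two, the intermediate value theorem on
a small sphere in `Ω` yields antipodal points `x ≠ y` with the same boundary distance `d`. For any
`z ∈ Ω` other than `x` and `y`,
`exp (j(x,z) + j(z,y)) ≥ (1 + |x-z|/d) (1 + |z-y|/d) > 1 + |x-y|/d = exp j(x,y)`,
so nothing lies strictly between `x` and `y` for `j_Ω`, whereas a geodesic would have a midpoint.
-/

section Antipodal

variable {E α : Type*} [NormedAddCommGroup E] [NormedSpace ℝ E]
  [LinearOrder α] [TopologicalSpace α] [OrderClosedTopology α]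

theorem exists_mem_sphere_apply_add_eq_apply_sub (hE : 1 < Module.rank ℝ E) {f : E → α} {p : E}
    {r : ℝ} (hr : 0 ≤ r) (hf : ContinuousOn f (sphere p r)) :
    ∃ v ∈ sphere (0 : E) r, f (p + v) = f (p - v) := by
  have : Nontrivial E := rank_pos_iff_nontrivial.1 (zero_lt_one.trans hE)
  obtain ⟨u, hu⟩ := (NormedSpace.sphere_nonempty (x := (0 : E))).2 hr
  have hu' : -u ∈ sphere (0 : E) r := by simpa using hu
  have hadd : ContinuousOn (fun v ↦ f (p + v)) (sphere 0 r) :=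
    hf.comp (by fun_prop) fun v hv ↦ by simpa using hv
  have hsub : ContinuousOn (fun v ↦ f (p - v)) (sphere 0 r) :=
    hf.comp (by fun_prop) fun v hv ↦ by simpa using hv
  have hsphere := isPreconnected_sphere hE (0 : E) r
  rcases le_total (f (p + u)) (f (p - u)) with h | h
  · exact hsphere.intermediate_value₂ hu hu' hadd hsub h (by simpa [← sub_eq_add_neg] using h)
  · exact hsphere.intermediate_value₂ hu' hu hadd hsub (by simpa [← sub_eq_add_neg] using h) h

theorem not_injOn_of_isOpen_of_continuousOn (hE : 1 < Module.rank ℝ E) {f : E → α} {U : Set E}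
    (hU : IsOpen U) (hne : U.Nonempty) (hf : ContinuousOn f U) : ¬ InjOn f U := by
  intro hinj
  obtain ⟨p, hp⟩ := hne
  obtain ⟨r, hr, hball⟩ := nhds_basis_closedBall.mem_iff.1 (hU.mem_nhds hp)
  have hsphere : sphere p r ⊆ U := sphere_subset_closedBall.trans hball
  obtain ⟨v, hv, hfv⟩ :=
    exists_mem_sphere_apply_add_eq_apply_sub hE hr.le (hf.mono hsphere)
  have hadd : p + v ∈ U := hsphere (by simpa using hv)
  have hsub : p - v ∈ U := hsphere (by simpa using hv)
  have : IsAddTorsionFree E := .of_isTorsionFree ℝ E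
  have hv0 : v = 0 := by
    have hpv : p + v = p + -v := by simpa [sub_eq_add_neg] using hinj hadd hsub hfv
    exact self_eq_neg.1 (add_left_cancel hpv)
  exact ne_of_mem_sphere hv hr.ne' hv0

end Antipodal

section IsometricParametrization

variable {X : Type*} {d : X → X → ℝ} {γ : ℝ → X} {I : Set ℝ}

theorem injOn_of_apply_apply_eq_abs_sub
    (hγ : ∀ s ∈ I, ∀ t ∈ I, d (γ s) (γ t) = |s - t|) : InjOn γ I := by
  intro s hs t ht hst
  have h : |s - t| = |s - s| := by rw [← hγ s hs t ht, ← hγ s hs s hs, hst]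
  simpa [sub_eq_zero] using h

theorem apply_add_apply_eq_of_le_of_le
    (hγ : ∀ s ∈ I, ∀ t ∈ I, d (γ s) (γ t) = |s - t|) {a b c : ℝ} (ha : a ∈ I) (hb : b ∈ I)
    (hc : c ∈ I) (hab : a ≤ b) (hbc : b ≤ c) :
    d (γ a) (γ b) + d (γ b) (γ c) = d (γ a) (γ c) := by
  rw [hγ a ha b hb, hγ b hb c hc, hγ a ha c hc, abs_sub_comm a b, abs_sub_comm b c,
    abs_sub_comm a c, abs_of_nonneg (sub_nonneg.2 hab), abs_of_nonneg (sub_nonneg.2 hbc),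
    abs_of_nonneg (sub_nonneg.2 (hab.trans hbc)), add_comm, sub_add_sub_cancel]

end IsometricParametrization

theorem log_one_add_add_lt {a b : ℝ} (ha : 0 < a) (hb : 0 < b) :
    Real.log (1 + (a + b)) < Real.log (1 + a) + Real.log (1 + b) := by
  rw [← Real.log_mul (by positivity) (by positivity)]
  exact Real.log_lt_log (by positivity) (by linarith [mul_pos ha hb])

theorem infDist_frontier_pos {X : Type*} [PseudoMetricSpace X] {U : Set X} {x : X}
    (hopen : IsOpen U) (hfrontier : (frontier U).Nonempty) (hx : x ∈ U) :
    0 < infDist x (frontier U) := by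
  rw [← isClosed_frontier.notMem_iff_infDist_pos hfrontier]
  exact fun hxfr ↦ hopen.inter_frontier_eq.subset ⟨hx, hxfr⟩

section DistanceRatio

variable {E : Type*} [NormedAddCommGroup E] {Ω : Set E} {x y z : E}

theorem jDist_comm (Ω : Set E) (x y : E) : jDist Ω x y = jDist Ω y x := by
  rw [jDist, jDist, dist_comm, min_comm]

theorem jDist_eq_of_infDist_eq (h : infDist x (frontier Ω) = infDist y (frontier Ω)) :
    jDist Ω x y = Real.log (1 + dist x y / infDist x (frontier Ω)) := by
  rw [jDist, ← h, min_self]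

theorem log_one_add_dist_div_infDist_le_jDist (hx : 0 < infDist x (frontier Ω))
    (hy : 0 < infDist y (frontier Ω)) :
    Real.log (1 + dist x y / infDist x (frontier Ω)) ≤ jDist Ω x y := by
  unfold jDist
  gcongr
  exact min_le_left _ _

theorem jDist_pos (hx : 0 < infDist x (frontier Ω)) (hy : 0 < infDist y (frontier Ω))
    (hxy : x ≠ y) : 0 < jDist Ω x y := by
  have hdist : 0 < dist x y := dist_pos.2 hxy
  refine lt_of_lt_of_le (Real.log_pos ?_) (log_one_add_dist_div_infDist_le_jDist hx hy)
  exact lt_add_of_pos_right 1 (by positivity)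

theorem jDist_lt_jDist_add_jDist (hx : 0 < infDist x (frontier Ω))
    (hxy : infDist x (frontier Ω) = infDist y (frontier Ω)) (hz : 0 < infDist z (frontier Ω))
    (hzx : z ≠ x) (hzy : z ≠ y) : jDist Ω x y < jDist Ω x z + jDist Ω z y := by
  set d := infDist x (frontier Ω)
  have hdxz : 0 < dist x z := dist_pos.2 hzx.symm
  have hdzy : 0 < dist z y := dist_pos.2 hzy
  have hxz_le : Real.log (1 + dist x z / d) ≤ jDist Ω x z :=
    log_one_add_dist_div_infDist_le_jDist hx hz
  have hzy_le : Real.log (1 + dist z y / d) ≤ jDist Ω z y := by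
    rw [jDist_comm, dist_comm, hxy]
    exact log_one_add_dist_div_infDist_le_jDist (hxy ▸ hx) hz
  calc jDist Ω x y = Real.log (1 + dist x y / d) := jDist_eq_of_infDist_eq hxy
    _ ≤ Real.log (1 + (dist x z / d + dist z y / d)) := by
      rw [← add_div]
      gcongr
      exact dist_triangle x z y
    _ < Real.log (1 + dist x z / d) + Real.log (1 + dist z y / d) :=
      log_one_add_add_lt (by positivity) (by positivity)
    _ ≤ jDist Ω x z + jDist Ω z y := add_le_add hxz_le hzy_le

theorem not_exists_jDist_geodesic_of_infDist_eq (hopen : IsOpen Ω)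
    (hfrontier : (frontier Ω).Nonempty) (hx : x ∈ Ω) (hy : y ∈ Ω) (hne : x ≠ y)
    (hxy : infDist x (frontier Ω) = infDist y (frontier Ω)) :
    ¬ ∃ γ : ℝ → E, MapsTo γ (Icc 0 (jDist Ω x y)) Ω ∧ γ 0 = x ∧ γ (jDist Ω x y) = y ∧
      ∀ s ∈ Icc 0 (jDist Ω x y), ∀ t ∈ Icc 0 (jDist Ω x y), jDist Ω (γ s) (γ t) = |s - t| := by
  rintro ⟨γ, hmaps, hγx, hγy, hγ⟩
  have hpos {w : E} (hw : w ∈ Ω) := infDist_frontier_pos hopen hfrontier hw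
  have hJ : 0 < jDist Ω x y := jDist_pos (hpos hx) (hpos hy) hne
  set J := jDist Ω x y
  have h0 : 0 ∈ Icc 0 J := left_mem_Icc.2 hJ.le
  have h1 : J ∈ Icc 0 J := right_mem_Icc.2 hJ.le
  have hm : J / 2 ∈ Icc 0 J := ⟨by positivity, by linarith⟩
  have hinj : InjOn γ (Icc 0 J) := injOn_of_apply_apply_eq_abs_sub hγ
  have hmx : γ (J / 2) ≠ x := hγx ▸ hinj.ne hm h0 (by positivity)
  have hmy : γ (J / 2) ≠ y := ne_of_ne_of_eq (hinj.ne hm h1 (by linarith)) hγy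
  have hadd : jDist Ω x (γ (J / 2)) + jDist Ω (γ (J / 2)) y = jDist Ω x y := by
    simpa only [hγx, hγy] using apply_add_apply_eq_of_le_of_le hγ h0 hm h1 hm.1 hm.2
  exact hadd.not_gt (jDist_lt_jDist_add_jDist (hpos hx) hxy (hpos (hmaps hm)) hmx hmy)

end DistanceRatio

theorem j_metric_not_geodesic_general {E : Type*} [NormedAddCommGroup E] [NormedSpace ℝ E]
    (hE : 1 < Module.rank ℝ E) {Ω : Set E} (hopen : IsOpen Ω) (hne : Ω.Nonempty)
    (hproper : Ω ≠ univ) :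
    ∃ x ∈ Ω, ∃ y ∈ Ω, x ≠ y ∧
      ¬ ∃ γ : ℝ → E,
          MapsTo γ (Icc 0 (jDist Ω x y)) Ω ∧
          γ 0 = x ∧ γ (jDist Ω x y) = y ∧
          ∀ s ∈ Icc 0 (jDist Ω x y), ∀ t ∈ Icc 0 (jDist Ω x y),
            jDist Ω (γ s) (γ t) = |s - t| := by
  have hfrontier : (frontier Ω).Nonempty := nonempty_frontier_iff.2 ⟨hne, hproper⟩
  have hninj : ¬ InjOn (infDist · (frontier Ω)) Ω :=
    not_injOn_of_isOpen_of_continuousOn hE hopen hne (continuous_infDist_pt _).continuousOn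
  obtain ⟨x, hx, y, hy, hxy, hxy_ne⟩ : ∃ x ∈ Ω, ∃ y ∈ Ω,
      infDist x (frontier Ω) = infDist y (frontier Ω) ∧ x ≠ y := by
    simpa [InjOn] using hninj
  exact ⟨x, hx, y, hy, hxy_ne,
    not_exists_jDist_geodesic_of_infDist_eq hopen hfrontier hx hy hxy_ne hxy⟩

/-- the metric space `(Ω, j_Ω)` is never geodesic. -/
theorem j_metric_not_geodesic (n : ℕ) (hn : 2 ≤ n)
    (Ω : Set (EuclideanSpace ℝ (Fin n)))
    (hopen : IsOpen Ω) (hconn : IsConnected Ω) (hproper : Ω ≠ univ) :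
    ∃ x ∈ Ω, ∃ y ∈ Ω, x ≠ y ∧
      ¬ ∃ γ : ℝ → EuclideanSpace ℝ (Fin n),
          MapsTo γ (Icc 0 (jDist Ω x y)) Ω ∧
          γ 0 = x ∧ γ (jDist Ω x y) = y ∧
          ∀ s ∈ Icc 0 (jDist Ω x y), ∀ t ∈ Icc 0 (jDist Ω x y),
            jDist Ω (γ s) (γ t) = |s - t| :=
  j_metric_not_geodesic_general
    (Module.lt_rank_of_lt_finrank (by rwa [finrank_euclideanSpace_fin]))
    hopen hconn.nonempty hproper
end
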